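/- Assume 2 ≤ k ≤ m, ρ < 4π, ρ > 4π(1 + α_i) for every 1 ≤ i ≤ k, ρ < 4π(1 + α_i) for every k + 1 ≤ i ≤ m, and ρ < 4π((1 + α_i) + (1 + α_j)) for every pair of indices 1 ≤ i < j ≤ m. Then Σ_{ρ,α}, endowed with the weak topology, is a nonempty topological space that is not contractible (it has exactly k ≥ 2 connected components, each reduced to a single Dirac mass δ_{p_i}). -/

import Mathlib

open MeasureTheory Metric
open scoped NNReal ENNReal BigOperators Classical

variable {X : Type*}

/-- The weighted cardinality function `χ` (for `p` injective). -/
noncomputable def chi {m : ℕ} (p : Fin m → X) (α : Fin m → ℝ) (q : X) : ℝ :=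
  1 + ∑ j, if p j = q then α j else 0

/-- The space of formal barycenters `Σ_{ρ,α}`, as a set of probability measures (endowed,
as a subspace of `ProbabilityMeasure X`, with the topology of weak convergence). -/
noncomputable def Bar [MetricSpace X] [MeasurableSpace X] {m : ℕ} (p : Fin m → X)
    (α : Fin m → ℝ) (ρ : ℝ) : Set (ProbabilityMeasure X) :=
  {μ | ∃ (J : Finset X) (t : X → ℝ≥0),
    (∑ q ∈ J, t q) = 1 ∧
    4 * Real.pi * (∑ q ∈ J, chi p α q) < ρ ∧
    (μ : Measure X) = ∑ q ∈ J, ((t q : ℝ≥0∞) • Measure.dirac q)}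

/-!
Any two distinct points have weights with `4π (χ x + χ y) ≥ ρ`, so an admissible support is a single
point `q` with `4π χ(q) < ρ`. As `q ↦ δ_q` is an embedding, `Σ_{ρ,α}` is homeomorphic to the set of
these points, a finite subset of `X` with at least two elements, hence disconnected.
-/

theorem subsingleton_coe_of_sum_lt {ι M : Type*} [AddCommMonoid M] [PartialOrder M]
    [IsOrderedAddMonoid M] {s : Finset ι} {w : ι → M} {c : M} (hw : ∀ x ∈ s, 0 ≤ w x)
    (hpair : (s : Set ι).Pairwise fun x y ↦ c ≤ w x + w y) (hs : ∑ x ∈ s, w x < c) :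
    (s : Set ι).Subsingleton := by
  intro x hx y hy
  by_contra hxy
  exact hs.not_ge ((hpair hx hy hxy).trans (Finset.add_le_sum hw hx hy hxy))

theorem not_contractibleSpace_of_finite_of_nontrivial {Y : Type*} [TopologicalSpace Y] [T1Space Y]
    [Finite Y] [Nontrivial Y] : ¬ ContractibleSpace Y := fun _ ↦
  not_subsingleton Y PreconnectedSpace.trivial_of_discrete

section Weight

variable {m : ℕ} {p : Fin m → X} {α : Fin m → ℝ} {ρ : ℝ}

theorem chi_apply (hp : Function.Injective p) (i : Fin m) : chi p α (p i) = 1 + α i := by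
  simp [chi, hp.eq_iff]

theorem chi_eq_one_of_notMem_range {q : X} (hq : q ∉ Set.range p) : chi p α q = 1 := by
  simp only [Set.mem_range, not_exists] at hq
  simp [chi, hq]

theorem chi_nonneg (hp : Function.Injective p) (hα : ∀ i, -1 ≤ α i) (q : X) : 0 ≤ chi p α q := by
  by_cases hq : q ∈ Set.range p
  · obtain ⟨i, rfl⟩ := hq
    rw [chi_apply hp]
    linarith [hα i]
  · rw [chi_eq_one_of_notMem_range hq]
    exact zero_le_one

theorem setOfPred_chi_lt_eq_image (hp : Function.Injective p) (hρ : ρ ≤ 4 * Real.pi) :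
    {q | 4 * Real.pi * chi p α q < ρ} = p '' {i | 4 * Real.pi * (1 + α i) < ρ} := by
  ext q
  by_cases hq : q ∈ Set.range p
  · obtain ⟨i, rfl⟩ := hq
    rw [hp.mem_set_image, Set.mem_ofPred_eq, Set.mem_ofPred_eq, chi_apply hp]
  · have hnot : q ∉ p '' {i | 4 * Real.pi * (1 + α i) < ρ} := fun h ↦
      hq (Set.image_subset_range _ _ h)
    simpa only [hnot, Set.mem_ofPred_eq, chi_eq_one_of_notMem_range hq, mul_one, iff_false, not_lt]

theorem pairwise_le_chi_add_chi (hp : Function.Injective p) (hα : ∀ i, -1 ≤ α i)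
    (hρ : ρ ≤ 4 * Real.pi)
    (hpair : Pairwise fun i j ↦ ρ ≤ 4 * Real.pi * ((1 + α i) + (1 + α j))) :
    Pairwise fun x y ↦ ρ ≤ 4 * Real.pi * (chi p α x + chi p α y) := by
  have le_of_one_le {c : ℝ} (hc : 1 ≤ c) : ρ ≤ 4 * Real.pi * c :=
    hρ.trans (le_mul_of_one_le_right (by positivity) hc)
  intro x y hxy
  by_cases hx : x ∈ Set.range p
  · by_cases hy : y ∈ Set.range p
    · obtain ⟨i, rfl⟩ := hx
      obtain ⟨j, rfl⟩ := hy
      simpa only [chi_apply hp] using hpair (ne_of_apply_ne p hxy)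
    · rw [chi_eq_one_of_notMem_range hy]
      exact le_of_one_le (le_add_of_nonneg_left (chi_nonneg hp hα x))
  · rw [chi_eq_one_of_notMem_range hx]
    exact le_of_one_le (le_add_of_nonneg_right (chi_nonneg hp hα y))

end Weight

section Barycenters

variable [MetricSpace X] [MeasurableSpace X] {m : ℕ} {p : Fin m → X} {α : Fin m → ℝ} {ρ : ℝ}

theorem diracProba_mem_bar {q : X} (hq : 4 * Real.pi * chi p α q < ρ) :
    diracProba q ∈ Bar p α ρ :=
  ⟨{q}, 1, by simp, by simpa only [Finset.sum_singleton] using hq, by simp [diracProba]⟩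

theorem bar_eq_image_diracProba (hχ : ∀ q, 0 ≤ chi p α q)
    (hpair : Pairwise fun x y ↦ ρ ≤ 4 * Real.pi * (chi p α x + chi p α y)) :
    Bar p α ρ = diracProba '' {q | 4 * Real.pi * chi p α q < ρ} := by
  refine Set.Subset.antisymm ?_ (Set.image_subset_iff.2 fun q hq ↦ diracProba_mem_bar hq)
  rintro μ ⟨J, t, ht, hJ, hμ⟩
  have hJ_subsingleton : (J : Set X).Subsingleton := by
    rw [Finset.mul_sum] at hJ
    refine subsingleton_coe_of_sum_lt (fun q _ ↦ mul_nonneg (by positivity) (hχ q)) ?_ hJ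
    intro x _ y _ hxy
    simpa only [mul_add] using hpair hxy
  obtain ⟨q, hq⟩ : J.Nonempty := Finset.nonempty_of_sum_ne_zero (ht ▸ one_ne_zero)
  obtain rfl : J = {q} := by exact_mod_cast hJ_subsingleton.eq_singleton_of_mem hq
  rw [Finset.sum_singleton] at ht hJ hμ
  refine ⟨q, hJ, Subtype.ext ?_⟩
  simp [diracProba, hμ, ht]

theorem barycenters_k_points_not_contractible_general [OpensMeasurableSpace X]
    (hp : Function.Injective p) (hρ : ρ ≤ 4 * Real.pi)
    (hpair : Pairwise fun i j ↦ ρ ≤ 4 * Real.pi * ((1 + α i) + (1 + α j)))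
    (hlow : {i | 4 * Real.pi * (1 + α i) < ρ}.Nontrivial) :
    Nonempty ↥(Bar p α ρ) ∧ ¬ ContractibleSpace ↥(Bar p α ρ) := by
  have hα (j : Fin m) : -1 ≤ α j := by
    obtain ⟨i, hi, hij⟩ := hlow.exists_ne j
    have : 4 * Real.pi * (1 + α i) < 4 * Real.pi * ((1 + α i) + (1 + α j)) :=
      hi.trans_le (hpair hij)
    linarith [lt_of_mul_lt_mul_left this (by positivity)]
  rw [bar_eq_image_diracProba (chi_nonneg hp hα) (pairwise_le_chi_add_chi hp hα hρ hpair),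
    setOfPred_chi_lt_eq_image hp hρ]
  let e := isEmbedding_diracProba.homeomorphImage (p '' {i | 4 * Real.pi * (1 + α i) < ρ})
  have : Nontrivial ↥(p '' {i | 4 * Real.pi * (1 + α i) < ρ}) := (hlow.image hp).coe_sort
  exact ⟨e.symm.surjective.nonempty, e.contractibleSpace_iff.not.1
    not_contractibleSpace_of_finite_of_nontrivial⟩

end Barycenters

/-- under the stated algebraic conditions (with `k ≥ 2`), the space
`Σ_{ρ,α}` with the weak topology is nonempty and not contractible. -/
theorem barycenters_k_points_not_contractible
    [MetricSpace X] [CompactSpace X] [Infinite X] [MeasurableSpace X] [BorelSpace X]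
    {m : ℕ} (hm : 1 ≤ m) (p : Fin m → X) (hp : Function.Injective p)
    (α : Fin m → ℝ) (hα : ∀ j, -1 < α j ∧ α j < 0) (hmono : Monotone α)
    (ρ : ℝ) (hρ : 0 < ρ)
    (k : ℕ) (hk2 : 2 ≤ k) (hkm : k ≤ m)
    (hρ4 : ρ < 4 * Real.pi)
    (hlow : ∀ i : Fin m, (i : ℕ) < k → 4 * Real.pi * (1 + α i) < ρ)
    (hhigh : ∀ i : Fin m, k ≤ (i : ℕ) → ρ < 4 * Real.pi * (1 + α i))
    (hpair : ∀ i j : Fin m, i < j → ρ < 4 * Real.pi * ((1 + α i) + (1 + α j))) :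
    Nonempty ↥(Bar p α ρ) ∧ ¬ ContractibleSpace ↥(Bar p α ρ) := by
  have hpair' : Pairwise fun i j ↦ ρ ≤ 4 * Real.pi * ((1 + α i) + (1 + α j)) := fun i j hij ↦
    hij.lt_or_gt.elim (fun h ↦ (hpair i j h).le)
      fun h ↦ (hpair j i h).le.trans_eq (by rw [add_comm (1 + α j)])
  exact barycenters_k_points_not_contractible_general hp hρ4.le hpair'
    ⟨⟨0, by lia⟩, hlow _ (by lia), ⟨1, by lia⟩, hlow _ (by lia), by simp⟩
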